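/- For every continuously differentiable function f : [−π, π] → ℝ with f(0) = 0 and every θ ∈ [−π, π], f(θ)² ≤ (π³/12)·sin(θ/2)²·∫_{−π}^{π} f′(ϑ)²/sin(ϑ/2)² dϑ (the weighted integral being allowed to be infinite, in which case the inequality is trivial). -/

import Mathlib

open MeasureTheory

/-!
By the fundamental theorem of calculus `‖f θ‖ ≤ |∫₀^θ ‖f'‖|`, which is trivial unless `f'` is
integrable, and Cauchy–Schwarz for `‖f'‖ = |sin (ϑ / 2)| · (‖f'‖ / |sin (ϑ / 2)|)` bounds the square
of the right-hand side by `|∫₀^θ sin² (ϑ / 2)|` times the weighted integral. The first factor is at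
most `|θ|³ / 12` because `|sin x| ≤ |x|`, and `|θ| ≤ π |sin (θ / 2)|` on `[-π, π]` by concavity of
the sine.
-/

section CauchySchwarz

variable {α : Type*} [MeasurableSpace α] {μ : Measure α}

lemma sq_lintegral_mul_le {u v : α → ENNReal} (hu : AEMeasurable u μ) (hv : AEMeasurable v μ) :
    (∫⁻ x, u x * v x ∂μ) ^ 2 ≤ (∫⁻ x, u x ^ 2 ∂μ) * ∫⁻ x, v x ^ 2 ∂μ := by
  have sq_rpow_half (t : ENNReal) : (t ^ (1 / 2 : ℝ)) ^ 2 = t := by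
    rw [← ENNReal.rpow_mul_natCast]
    norm_num
  have holder := ENNReal.lintegral_mul_le_Lp_mul_Lq μ Real.HolderConjugate.two_two hu hv
  simp only [Pi.mul_apply, ENNReal.rpow_two] at holder
  calc (∫⁻ x, u x * v x ∂μ) ^ 2
      ≤ ((∫⁻ x, u x ^ 2 ∂μ) ^ (1 / 2 : ℝ) * (∫⁻ x, v x ^ 2 ∂μ) ^ (1 / 2 : ℝ)) ^ 2 := by gcongr
    _ = (∫⁻ x, u x ^ 2 ∂μ) * ∫⁻ x, v x ^ 2 ∂μ := by
        rw [mul_pow, sq_rpow_half, sq_rpow_half]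

lemma sq_lintegral_enorm_le_lintegral_sq_mul_lintegral_sq_div {E : Type*} [NormedAddCommGroup E]
    {g : α → E} {w : α → ℝ} (hg : AEStronglyMeasurable g μ) (hw : AEMeasurable w μ)
    (hw0 : ∀ᵐ x ∂μ, w x ≠ 0) :
    (∫⁻ x, ‖g x‖ₑ ∂μ) ^ 2
      ≤ (∫⁻ x, ENNReal.ofReal (w x ^ 2) ∂μ) * ∫⁻ x, ENNReal.ofReal (‖g x‖ ^ 2 / w x ^ 2) ∂μ := by
  have factor : ∀ᵐ x ∂μ, ‖g x‖ₑ = ‖w x‖ₑ * ‖‖g x‖ / w x‖ₑ := by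
    filter_upwards [hw0] with x hx
    rw [← enorm_mul, mul_div_cancel₀ _ hx, enorm_norm]
  have enorm_sq (t : ℝ) : ‖t‖ₑ ^ 2 = ENNReal.ofReal (t ^ 2) := by
    rw [← enorm_pow, Real.enorm_of_nonneg (sq_nonneg t)]
  rw [lintegral_congr_ae factor]
  simpa only [enorm_sq, Pi.div_apply, div_pow] using
    sq_lintegral_mul_le hw.enorm (hg.norm.aemeasurable.div hw).enorm

end CauchySchwarz

section RightDerivative

variable {E : Type*} [NormedAddCommGroup E] [NormedSpace ℝ E] [CompleteSpace E]
  {f f' : ℝ → E} {a b : ℝ}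

lemma aestronglyMeasurable_uIoc_of_hasDeriv_right
    (hderiv : ∀ x ∈ Set.Ioo (min a b) (max a b), HasDerivWithinAt f (f' x) (Set.Ioi x) x) :
    AEStronglyMeasurable f' (volume.restrict (Set.uIoc a b)) := by
  rw [Set.uIoc, ← restrict_Ioo_eq_restrict_Ioc]
  refine (aestronglyMeasurable_derivWithin_Ioi f _).congr ?_
  filter_upwards [ae_restrict_mem measurableSet_Ioo] with x hx
  exact (hderiv x hx).derivWithin (uniqueDiffWithinAt_Ioi x)

lemma enorm_sub_le_lintegral_of_hasDeriv_right (hcont : ContinuousOn f (Set.uIcc a b))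
    (hderiv : ∀ x ∈ Set.Ioo (min a b) (max a b), HasDerivWithinAt f (f' x) (Set.Ioi x) x) :
    ‖f b - f a‖ₑ ≤ ∫⁻ x in Set.uIoc a b, ‖f' x‖ₑ := by
  obtain htop | hfin := eq_top_or_lt_top (∫⁻ x in Set.uIoc a b, ‖f' x‖ₑ)
  · exact htop ▸ le_top
  · have hint : IntervalIntegrable f' volume a b :=
      intervalIntegrable_iff.2 ⟨aestronglyMeasurable_uIoc_of_hasDeriv_right hderiv, hfin⟩
    calc ‖f b - f a‖ₑ = ‖∫ x in a..b, f' x‖ₑ := by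
          rw [intervalIntegral.integral_eq_sub_of_hasDeriv_right hcont hderiv hint]
      _ = ‖∫ x in Set.uIoc a b, f' x‖ₑ := by
          rw [← ofReal_norm, ← ofReal_norm, intervalIntegral.norm_intervalIntegral_eq]
      _ ≤ ∫⁻ x in Set.uIoc a b, ‖f' x‖ₑ := enorm_integral_le_lintegral_enorm _

lemma enorm_sub_sq_le_lintegral_sq_mul_lintegral_sq_div {w : ℝ → ℝ}
    (hcont : ContinuousOn f (Set.uIcc a b))
    (hderiv : ∀ x ∈ Set.Ioo (min a b) (max a b), HasDerivWithinAt f (f' x) (Set.Ioi x) x)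
    (hw : AEMeasurable w (volume.restrict (Set.uIoc a b)))
    (hw0 : ∀ᵐ x ∂volume.restrict (Set.uIoc a b), w x ≠ 0) :
    ‖f b - f a‖ₑ ^ 2
      ≤ (∫⁻ x in Set.uIoc a b, ENNReal.ofReal (w x ^ 2))
        * ∫⁻ x in Set.uIoc a b, ENNReal.ofReal (‖f' x‖ ^ 2 / w x ^ 2) :=
  (pow_le_pow_left' (enorm_sub_le_lintegral_of_hasDeriv_right hcont hderiv) 2).trans <|
    sq_lintegral_enorm_le_lintegral_sq_mul_lintegral_sq_div
      (aestronglyMeasurable_uIoc_of_hasDeriv_right hderiv) hw hw0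

end RightDerivative

section HalfAngleSine

lemma lintegral_uIoc_zero_sq (θ : ℝ) :
    ∫⁻ x in Set.uIoc 0 θ, ENNReal.ofReal (x ^ 2) = ENNReal.ofReal (|θ| ^ 3 / 3) := by
  have hint : IntegrableOn (fun x : ℝ ↦ x ^ 2) (Set.uIoc 0 θ) :=
    intervalIntegrable_iff.1 (intervalIntegral.intervalIntegrable_pow 2)
  have hnonneg : 0 ≤ ∫ x in Set.uIoc 0 θ, x ^ 2 := integral_nonneg fun x ↦ sq_nonneg x
  rw [← ofReal_integral_eq_lintegral_ofReal hint (.of_forall fun x ↦ sq_nonneg x),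
    ← abs_of_nonneg hnonneg, ← intervalIntegral.abs_intervalIntegral_eq, integral_pow]
  norm_num [abs_div]

lemma lintegral_uIoc_zero_sin_half_sq_le (θ : ℝ) :
    ∫⁻ x in Set.uIoc 0 θ, ENNReal.ofReal (Real.sin (x / 2) ^ 2)
      ≤ ENNReal.ofReal (|θ| ^ 3 / 12) := by
  have sin_half_sq_le (x : ℝ) : Real.sin (x / 2) ^ 2 ≤ 1 / 4 * x ^ 2 := by
    linarith [Real.sin_sq_le_sq (x := x / 2)]
  calc ∫⁻ x in Set.uIoc 0 θ, ENNReal.ofReal (Real.sin (x / 2) ^ 2)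
      ≤ ∫⁻ x in Set.uIoc 0 θ, ENNReal.ofReal (1 / 4) * ENNReal.ofReal (x ^ 2) := by
        refine lintegral_mono fun x ↦ ?_
        rw [← ENNReal.ofReal_mul (by norm_num)]
        exact ENNReal.ofReal_le_ofReal (sin_half_sq_le x)
    _ = ENNReal.ofReal (|θ| ^ 3 / 12) := by
        rw [lintegral_const_mul _ (by fun_prop), lintegral_uIoc_zero_sq,
          ← ENNReal.ofReal_mul (by norm_num)]
        ring_nf

variable {θ : ℝ}

lemma abs_le_pi_mul_abs_sin_half (hθ : |θ| ≤ Real.pi) : |θ| ≤ Real.pi * |Real.sin (θ / 2)| := by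
  have half_abs : |θ / 2| = |θ| / 2 := by rw [abs_div, abs_two]
  calc |θ| = Real.pi * (2 / Real.pi * |θ / 2|) := by
        rw [half_abs]
        field_simp
    _ ≤ Real.pi * |Real.sin (θ / 2)| := by
        gcongr
        exact Real.mul_abs_le_abs_sin (by linarith)

lemma sin_half_ne_zero (hθ : |θ| ≤ Real.pi) (hθ0 : θ ≠ 0) : Real.sin (θ / 2) ≠ 0 := by
  intro hsin
  have := abs_le_pi_mul_abs_sin_half hθ
  rw [hsin, abs_zero, mul_zero] at this
  exact hθ0 (abs_nonpos_iff.1 this)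

lemma abs_pow_three_le_pi_pow_three_mul_sin_half_sq (hθ : |θ| ≤ Real.pi) :
    |θ| ^ 3 ≤ Real.pi ^ 3 * Real.sin (θ / 2) ^ 2 :=
  calc |θ| ^ 3 = |θ| * |θ| ^ 2 := by ring
    _ ≤ Real.pi * (Real.pi * |Real.sin (θ / 2)|) ^ 2 := by
        gcongr
        exact abs_le_pi_mul_abs_sin_half hθ
    _ = Real.pi ^ 3 * Real.sin (θ / 2) ^ 2 := by
        rw [mul_pow, sq_abs]
        ring

lemma lintegral_uIoc_zero_sin_half_sq_le_pi_pow_three_mul (hθ : |θ| ≤ Real.pi) :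
    ∫⁻ x in Set.uIoc 0 θ, ENNReal.ofReal (Real.sin (x / 2) ^ 2)
      ≤ ENNReal.ofReal (Real.pi ^ 3 / 12 * Real.sin (θ / 2) ^ 2) :=
  (lintegral_uIoc_zero_sin_half_sq_le θ).trans <| ENNReal.ofReal_le_ofReal <| by
    linarith [abs_pow_three_le_pi_pow_three_mul_sin_half_sq hθ]

end HalfAngleSine

theorem pointwise_weighted_bound_general {E : Type*} [NormedAddCommGroup E] [NormedSpace ℝ E]
    [CompleteSpace E] {f f' : ℝ → E}
    (hf : ∀ θ ∈ Set.Icc (-Real.pi) Real.pi,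
      HasDerivWithinAt f (f' θ) (Set.Icc (-Real.pi) Real.pi) θ)
    (hf0 : f 0 = 0) {θ : ℝ} (hθ : θ ∈ Set.Icc (-Real.pi) Real.pi) :
    ENNReal.ofReal (‖f θ‖ ^ 2)
      ≤ ENNReal.ofReal (Real.pi ^ 3 / 12 * Real.sin (θ / 2) ^ 2)
        * ∫⁻ ϑ in Set.Icc (-Real.pi) Real.pi,
            ENNReal.ofReal (‖f' ϑ‖ ^ 2 / Real.sin (ϑ / 2) ^ 2) := by
  have hsub : Set.uIcc 0 θ ⊆ Set.Icc (-Real.pi) Real.pi :=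
    Set.uIcc_subset_Icc ⟨neg_nonpos.2 Real.pi_nonneg, Real.pi_nonneg⟩ hθ
  have hcont : ContinuousOn f (Set.uIcc 0 θ) := fun x hx ↦
    (hf x (hsub hx)).continuousWithinAt.mono hsub
  have hderiv : ∀ x ∈ Set.Ioo (min 0 θ) (max 0 θ), HasDerivWithinAt f (f' x) (Set.Ioi x) x :=
    fun x hx ↦ ((hf x (hsub (Set.Ioo_subset_Icc_self hx))).hasDerivAt <|
      Filter.mem_of_superset (Icc_mem_nhds hx.1 hx.2) hsub).hasDerivWithinAt
  have hsin : ∀ᵐ x ∂volume.restrict (Set.uIoc 0 θ), Real.sin (x / 2) ≠ 0 := by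
    filter_upwards [ae_restrict_mem measurableSet_uIoc, Measure.ae_ne _ 0] with x hx hx0
    exact sin_half_ne_zero (abs_le.2 (hsub (Set.uIoc_subset_uIcc hx))) hx0
  have hsq : ENNReal.ofReal (‖f θ‖ ^ 2) = ‖f θ - f 0‖ₑ ^ 2 := by
    rw [hf0, sub_zero, ENNReal.ofReal_pow (norm_nonneg _), ofReal_norm]
  rw [hsq]
  refine (enorm_sub_sq_le_lintegral_sq_mul_lintegral_sq_div hcont hderiv
    (by fun_prop) hsin).trans ?_
  gcongr
  · exact lintegral_uIoc_zero_sin_half_sq_le_pi_pow_three_mul (abs_le.2 hθ)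
  · exact Set.uIoc_subset_uIcc.trans hsub

/-- Pointwise estimate `‖f/sin(θ/2)‖_{L^∞} ≲ ⟦f⟧_ℋ`: for every continuously
differentiable `f` on `[-π, π]` with `f(0) = 0` and every `θ ∈ [-π, π]`,
`f(θ)² ≤ (π³/12)·sin(θ/2)²·∫_{-π}^{π} f'(ϑ)²/sin(ϑ/2)² dϑ`, where the
weighted integral is taken in `[0, ∞]` (so the inequality is trivial if it
is infinite). -/
theorem pointwise_weighted_bound (f f' : ℝ → ℝ)
    (hf : ∀ θ ∈ Set.Icc (-Real.pi) Real.pi,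
      HasDerivWithinAt f (f' θ) (Set.Icc (-Real.pi) Real.pi) θ)
    (hcont : ContinuousOn f' (Set.Icc (-Real.pi) Real.pi))
    (hf0 : f 0 = 0) :
    ∀ θ ∈ Set.Icc (-Real.pi) Real.pi,
      ENNReal.ofReal (f θ ^ 2)
        ≤ ENNReal.ofReal (Real.pi ^ 3 / 12 * Real.sin (θ / 2) ^ 2)
          * ∫⁻ ϑ in Set.Icc (-Real.pi) Real.pi,
              ENNReal.ofReal (f' ϑ ^ 2 / Real.sin (ϑ / 2) ^ 2) := by
  simpa only [Real.norm_eq_abs, sq_abs] using fun θ hθ ↦ pointwise_weighted_bound_general hf hf0 hθ
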